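/- Assume a = 0. Then there exist linear forms L_1, L_2 ∈ S_1 such that Q = L_1 L_2 if and only if D7 = 0, where D7 = (μ_{23}cd² − 2def + be²)(μ_{13}μ_{21}cd² − 2def + μ_{12}μ_{23}μ_{31}be²). -/

import Mathlib

noncomputable section

/-- The skew-commutation relation `z_j z_i = μ_{ij} z_i z_j` on the free algebra. -/
inductive SkewRel (k : Type*) [Field k] (μ : Fin 3 → Fin 3 → k) :
    FreeAlgebra k (Fin 3) → FreeAlgebra k (Fin 3) → Prop
  | rel (i j : Fin 3) :
      SkewRel k μ (FreeAlgebra.ι k j * FreeAlgebra.ι k i)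
        (μ i j • (FreeAlgebra.ι k i * FreeAlgebra.ι k j))

/-- The generators `z_1, z_2, z_3` of `S = k⟨z_1,z_2,z_3⟩/(z_j z_i - μ_{ij} z_i z_j)`. -/
def z (k : Type*) [Field k] (μ : Fin 3 → Fin 3 → k) (i : Fin 3) :
    RingQuot (SkewRel k μ) :=
  RingQuot.mkAlgHom k (SkewRel k μ) (FreeAlgebra.ι k i)

/-!
Two expressions `zᵀ M z` and `zᵀ N z` agree in `S` exactly when `M_{ij} + μ_{ij} M_{ji}` and
`N_{ij} + μ_{ij} N_{ji}` agree, because every `B` with `B_{ji} = μ_{ij} B_{ij}` is the matrix of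
values on the `z_i z_j` of a linear functional on `S`. Hence `Q = L₁ L₂` is a system of six
equations in the coefficients `p`, `q` of `L₁`, `L₂`. For `a = 0` one of them reads `p₀ q₀ = 0`. If
`q₀ = 0`, eliminating `p` and `q` gives the vanishing of the first factor of `D7`; the case `p₀ = 0`
is the same statement in the opposite algebra and gives the second factor. Conversely, if
`(d, e) ≠ 0` the two factors are found by solving linear equations, while for `d = e = 0` the binary
form in `z_2`, `z_3` must be split, which requires a square root of `f² - μ_{23} b c`; over an
arbitrary field of characteristic not `2` this is the only additional condition.
-/

namespace SkewRel

section Quadratic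

variable {k : Type*} [Field k] {μ : Fin 3 → Fin 3 → k}

theorem z_mul_z_swap (i j : Fin 3) : z k μ j * z k μ i = μ i j • (z k μ i * z k μ j) := by
  simpa only [z, map_mul, map_smul] using RingQuot.mkAlgHom_rel k (SkewRel.rel (μ := μ) i j)

/-- Left multiplication by `z_i` on the candidate truncation `k ⊕ k³ ⊕ k` of `S`, whose degree-two
part is one-dimensional with `z_i z_j` acting there as `B i j`. It is used to build linear
functionals on `S` with prescribed values on the products `z_i z_j`. -/
def truncatedMul (B : Matrix (Fin 3) (Fin 3) k) (i : Fin 3) :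
    Module.End k (k × (Fin 3 → k) × k) where
  toFun x := (0, Pi.single i x.1, B i ⬝ᵥ x.2.1)
  map_add' x y := by simp only [Prod.fst_add, Prod.snd_add, Pi.single_add, dotProduct_add,
    Prod.mk_add_mk, add_zero]
  map_smul' m x := by simp only [Prod.smul_fst, Prod.smul_snd, Pi.single_smul, dotProduct_smul,
    Prod.smul_mk, smul_zero, RingHom.id_apply]

theorem truncatedMul_mul_apply (B : Matrix (Fin 3) (Fin 3) k) (i j : Fin 3)
    (x : k × (Fin 3 → k) × k) :
    (truncatedMul B i * truncatedMul B j) x = (0, 0, B i j * x.1) := by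
  simp [truncatedMul]

theorem exists_functional_z_mul_z (B : Matrix (Fin 3) (Fin 3) k)
    (hB : ∀ i j, B j i = μ i j * B i j) :
    ∃ φ : RingQuot (SkewRel k μ) →ₗ[k] k, ∀ i j, φ (z k μ i * z k μ j) = B i j := by
  have hrel : ∀ ⦃x y⦄, SkewRel k μ x y →
      FreeAlgebra.lift k (truncatedMul B) x = FreeAlgebra.lift k (truncatedMul B) y := by
    rintro _ _ ⟨i, j⟩
    refine LinearMap.ext fun x => ?_
    simp only [map_mul, map_smul, FreeAlgebra.lift_ι_apply, LinearMap.smul_apply,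
      truncatedMul_mul_apply, Prod.smul_mk, smul_zero, smul_eq_mul, mul_zero, hB i j, mul_assoc]
  let ρ := RingQuot.liftAlgHom k ⟨FreeAlgebra.lift k (truncatedMul B), hrel⟩
  have hρ (i : Fin 3) : ρ (z k μ i) = truncatedMul B i := by simp [ρ, z]
  let top : Module.End k (k × (Fin 3 → k) × k) →ₗ[k] k :=
    LinearMap.snd k _ k ∘ₗ LinearMap.snd k k _ ∘ₗ LinearMap.applyₗ (1, 0, 0)
  refine ⟨top ∘ₗ ρ.toLinearMap, fun i j => ?_⟩
  simp [top, hρ, truncatedMul_mul_apply, -Module.End.mul_apply]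

variable (μ) in
/-- The element `zᵀ M z = ∑ M_{ij} z_i z_j` of `S_2` with (not necessarily symmetric) Gram
matrix `M`. -/
def quadraticForm (M : Matrix (Fin 3) (Fin 3) k) : RingQuot (SkewRel k μ) :=
  ∑ i, ∑ j, M i j • (z k μ i * z k μ j)

variable (μ) in
/-- Twice the `μ`-symmetric part of a Gram matrix: the result `N` satisfies
`N_{ij} = μ_{ij} N_{ji}`. It is the complete invariant of the quadratic form `zᵀ M z`. -/
def muSymmetrization (M : Matrix (Fin 3) (Fin 3) k) : Matrix (Fin 3) (Fin 3) k :=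
  Matrix.of fun i j => M i j + μ i j * M j i

theorem two_smul_quadraticForm (M : Matrix (Fin 3) (Fin 3) k) :
    (2 : k) • quadraticForm μ M = quadraticForm μ (muSymmetrization μ M) := by
  have hswap : quadraticForm μ M = ∑ i, ∑ j, (μ i j * M j i) • (z k μ i * z k μ j) := by
    rw [quadraticForm, Finset.sum_comm]
    refine Finset.sum_congr rfl fun i _ => Finset.sum_congr rfl fun j _ => ?_
    rw [z_mul_z_swap i j, smul_smul, mul_comm]
  rw [two_smul]
  nth_rewrite 2 [hswap]
  simp only [quadraticForm, muSymmetrization, Matrix.of_apply, add_smul, Finset.sum_add_distrib]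

theorem exists_functional_quadraticForm (hμ : ∀ i j, μ i j * μ j i = 1) (i j : Fin 3) :
    ∃ φ : RingQuot (SkewRel k μ) →ₗ[k] k,
      ∀ M, φ (quadraticForm μ M) = muSymmetrization μ M i j := by
  -- Symmetrization with the transposed parameters is adjoint to `muSymmetrization μ`.
  let B := muSymmetrization (fun l m => μ m l) (Matrix.single i j 1)
  have hB (l m : Fin 3) : B m l = μ l m * B l m := by
    simp only [B, muSymmetrization, Matrix.of_apply]
    linear_combination -Matrix.single i j 1 m l * hμ l m
  obtain ⟨φ, hφ⟩ := exists_functional_z_mul_z B hB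
  refine ⟨φ, fun M => ?_⟩
  simp only [quadraticForm, map_sum, map_smul, hφ, B, Matrix.single_apply,
    smul_eq_mul, mul_add, Finset.sum_add_distrib, ite_and, mul_ite, mul_one, mul_zero,
    Finset.sum_ite_irrel, Finset.sum_const_zero, Finset.sum_ite_eq, Finset.mem_univ, if_true,
    muSymmetrization, Matrix.of_apply, mul_comm]

theorem quadraticForm_eq_iff (h2 : (2 : k) ≠ 0) (hμ : ∀ i j, μ i j * μ j i = 1)
    {M N : Matrix (Fin 3) (Fin 3) k} :
    quadraticForm μ M = quadraticForm μ N ↔ muSymmetrization μ M = muSymmetrization μ N := by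
  constructor
  · intro h
    ext i j
    obtain ⟨φ, hφ⟩ := exists_functional_quadraticForm hμ i j
    rw [← hφ, ← hφ, h]
  · intro h
    refine smul_right_injective _ h2 ?_
    simp only [two_smul_quadraticForm, h]

theorem muSymmetrization_eq_iff (h2 : (2 : k) ≠ 0) (hμdiag : ∀ i, μ i i = 1)
    (hμ : ∀ i j, μ i j * μ j i = 1) {M N : Matrix (Fin 3) (Fin 3) k} :
    muSymmetrization μ M = muSymmetrization μ N ↔
      (∀ i, M i i = N i i) ∧
        ∀ i j, i < j → M i j + μ i j * M j i = N i j + μ i j * N j i := by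
  simp only [← Matrix.ext_iff, muSymmetrization, Matrix.of_apply]
  constructor
  · refine fun h => ⟨fun i => mul_left_cancel₀ h2 ?_, fun i j _ => h i j⟩
    simpa only [hμdiag, one_mul, ← two_mul] using h i i
  · rintro ⟨hdiag, hupper⟩ i j
    rcases lt_trichotomy i j with hij | rfl | hji
    · exact hupper i j hij
    · rw [hdiag]
    · linear_combination μ i j * hupper j i hji + (N i j - M i j) * hμ i j

theorem sum_smul_z_mul_sum_smul_z (p q : Fin 3 → k) :
    (∑ i, p i • z k μ i) * ∑ j, q j • z k μ j = quadraticForm μ (Matrix.vecMulVec p q) := by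
  simp only [quadraticForm, Matrix.vecMulVec_apply, Fintype.sum_mul_sum, smul_mul_smul_comm]

theorem mem_span_z_iff {L : RingQuot (SkewRel k μ)} :
    L ∈ Submodule.span k ({z k μ 0, z k μ 1, z k μ 2} : Set (RingQuot (SkewRel k μ))) ↔
      ∃ p : Fin 3 → k, ∑ i, p i • z k μ i = L := by
  rw [Submodule.mem_span_triple]
  simp only [Fin.exists_fin_succ_pi, Fin.exists_fin_zero_pi, Fin.sum_univ_three]
  rfl

theorem quadraticForm_eq_mul_iff (h2 : (2 : k) ≠ 0) (hμdiag : ∀ i, μ i i = 1)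
    (hμ : ∀ i j, μ i j * μ j i = 1) {M : Matrix (Fin 3) (Fin 3) k} :
    (∃ L1 ∈ Submodule.span k ({z k μ 0, z k μ 1, z k μ 2} : Set (RingQuot (SkewRel k μ))),
      ∃ L2 ∈ Submodule.span k ({z k μ 0, z k μ 1, z k μ 2} : Set (RingQuot (SkewRel k μ))),
        quadraticForm μ M = L1 * L2) ↔
      ∃ p q : Fin 3 → k, (∀ i, M i i = p i * q i) ∧
        ∀ i j, i < j → M i j + μ i j * M j i = p i * q j + μ i j * (p j * q i) := by
  simp only [mem_span_z_iff, exists_exists_eq_and, sum_smul_z_mul_sum_smul_z,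
    quadraticForm_eq_iff h2 hμ, muSymmetrization_eq_iff h2 hμdiag hμ,
    Matrix.vecMulVec_apply]

theorem quadraticForm_upperTriangular (a b c d e f : k) :
    quadraticForm μ !![a, d, e; 0, b, f; 0, 0, c] =
      a • (z k μ 0 * z k μ 0) + b • (z k μ 1 * z k μ 1) + c • (z k μ 2 * z k μ 2) +
        d • (z k μ 0 * z k μ 1) + e • (z k μ 0 * z k μ 2) + f • (z k μ 1 * z k μ 2) := by
  simp only [quadraticForm, Fin.sum_univ_three, Matrix.of_apply, Matrix.cons_val, zero_smul]
  abel

end Quadratic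

section Coefficients

variable {k : Type*} [Field k] {b c d e f r s t : k}

theorem isSquare_sq_sub_of_eq (h2 : (2 : k) ≠ 0) {p₁ p₂ q₁ q₂ : k}
    (h : p₁ * q₂ + t * p₂ * q₁ = 2 * f) :
    IsSquare (f ^ 2 - t * (p₁ * q₁) * (p₂ * q₂)) := by
  refine ⟨(p₁ * q₂ - t * p₂ * q₁) / 2, ?_⟩
  obtain rfl : f = (p₁ * q₂ + t * p₂ * q₁) / 2 := by rw [h, mul_div_cancel_left₀ f h2]
  field_simp
  ring

theorem exists_binary_mul_binary (ht : t ≠ 0) (hsq : IsSquare (f ^ 2 - t * b * c)) :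
    ∃ p₁ p₂ q₁ q₂ : k, p₁ * q₁ = b ∧ p₂ * q₂ = c ∧ p₁ * q₂ + t * p₂ * q₁ = 2 * f := by
  obtain ⟨g, hg⟩ := hsq
  by_cases hb : b = 0
  · exact ⟨2 * f, c, 0, 1, by rw [hb, mul_zero], mul_one c, by ring⟩
  · refine ⟨1, (f + g) / (t * b), b, f - g, one_mul b, ?_, ?_⟩
    · field_simp
      linear_combination hg
    · field_simp
      ring

theorem exists_monic_ternary_mul_binary (h2 : (2 : k) ≠ 0) (ht : t ≠ 0) (hde : d ≠ 0 ∨ e ≠ 0)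
    (h : t * c * d ^ 2 - 2 * d * e * f + b * e ^ 2 = 0) :
    ∃ p₁ p₂ : k, p₁ * (2 * d) = b ∧ p₂ * (2 * e) = c ∧ p₁ * (2 * e) + t * p₂ * (2 * d) = 2 * f := by
  by_cases hd : d = 0
  · have he : e ≠ 0 := hde.resolve_left (not_not_intro hd)
    have hb : b = 0 := by simpa [hd, he] using h
    refine ⟨f / e, c / (2 * e), ?_, ?_, ?_⟩
    · rw [hd, hb, mul_zero, mul_zero]
    · field_simp
    · rw [hd]
      field_simp
      ring
  · refine ⟨b / (2 * d), (2 * d * f - b * e) / (2 * d ^ 2 * t), ?_, ?_, ?_⟩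
    · field_simp
    · field_simp
      linear_combination -h
    · field_simp
      ring

theorem exists_ternary_mul_binary_iff (h2 : (2 : k) ≠ 0) (ht : t ≠ 0) :
    (∃ p₀ p₁ p₂ q₁ q₂ : k, p₁ * q₁ = b ∧ p₂ * q₂ = c ∧ p₀ * q₁ = 2 * d ∧ p₀ * q₂ = 2 * e ∧
      p₁ * q₂ + t * p₂ * q₁ = 2 * f) ↔
      IsSquare (f ^ 2 - t * b * c) ∧ t * c * d ^ 2 - 2 * d * e * f + b * e ^ 2 = 0 := by
  constructor
  · rintro ⟨p₀, p₁, p₂, q₁, q₂, rfl, rfl, hd, he, hf⟩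
    refine ⟨isSquare_sq_sub_of_eq h2 hf, mul_left_cancel₀ (pow_ne_zero 2 h2) ?_⟩
    calc 2 ^ 2 * (t * (p₂ * q₂) * d ^ 2 - 2 * d * e * f + p₁ * q₁ * e ^ 2)
        = t * (p₂ * q₂) * (2 * d) ^ 2 - (2 * d) * (2 * e) * (2 * f) +
            p₁ * q₁ * (2 * e) ^ 2 := by ring
      _ = 2 ^ 2 * 0 := by rw [← hd, ← he, ← hf]; ring
  · rintro ⟨hsq, h⟩
    by_cases hde : d ≠ 0 ∨ e ≠ 0
    · obtain ⟨p₁, p₂, hb, hc, hf⟩ := exists_monic_ternary_mul_binary h2 ht hde h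
      exact ⟨1, p₁, p₂, 2 * d, 2 * e, hb, hc, one_mul _, one_mul _, hf⟩
    · obtain ⟨rfl, rfl⟩ : d = 0 ∧ e = 0 := by simpa only [not_or, not_not] using hde
      obtain ⟨p₁, p₂, q₁, q₂, hb, hc, hf⟩ := exists_binary_mul_binary ht hsq
      exact ⟨0, p₁, p₂, q₁, q₂, hb, hc, by simp, by simp, hf⟩

theorem isSquare_div_sq_iff {x y : k} (hy : y ≠ 0) : IsSquare (x / y ^ 2) ↔ IsSquare x :=
  ⟨fun h => by simpa [hy] using h.mul (IsSquare.sq y), fun h => h.div (IsSquare.sq y)⟩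

-- Reversing products replaces each `μ_{ij}` by its inverse, so the roles of the two factors can be
-- exchanged after rescaling `d`, `e`, `f`.
theorem exists_binary_mul_ternary_iff (h2 : (2 : k) ≠ 0) (hr : r ≠ 0) (hs : s ≠ 0)
    (ht : t ≠ 0) :
    (∃ p₁ p₂ q₀ q₁ q₂ : k, p₁ * q₁ = b ∧ p₂ * q₂ = c ∧ r * p₁ * q₀ = 2 * d ∧
      s * p₂ * q₀ = 2 * e ∧ p₁ * q₂ + t * p₂ * q₁ = 2 * f) ↔
      IsSquare (f ^ 2 - t * b * c) ∧
        s * r⁻¹ * c * d ^ 2 - 2 * d * e * f + r * t * s⁻¹ * b * e ^ 2 = 0 := by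
  have hsq : (f / t) ^ 2 - t⁻¹ * b * c = (f ^ 2 - t * b * c) / t ^ 2 := by field_simp
  have hdisc : t⁻¹ * c * (d / r) ^ 2 - 2 * (d / r) * (e / s) * (f / t) + b * (e / s) ^ 2 =
      (s * r⁻¹ * c * d ^ 2 - 2 * d * e * f + r * t * s⁻¹ * b * e ^ 2) / (r * s * t) := by
    field_simp
  have hrst : r * s * t ≠ 0 := mul_ne_zero (mul_ne_zero hr hs) ht
  have hop := exists_ternary_mul_binary_iff (b := b) (c := c) (d := d / r) (e := e / s)
    (f := f / t) h2 (inv_ne_zero ht)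
  rw [hsq, hdisc, isSquare_div_sq_iff ht, div_eq_zero_iff, or_iff_left hrst] at hop
  rw [← hop]
  constructor
  · rintro ⟨p₁, p₂, q₀, q₁, q₂, hb, hc, hd, he, hf⟩
    refine ⟨q₀, q₁, q₂, p₁, p₂, by rw [mul_comm, hb], by rw [mul_comm, hc], ?_, ?_, ?_⟩
    all_goals field_simp
    · linear_combination hd
    · linear_combination he
    · linear_combination hf
  · rintro ⟨q₀, q₁, q₂, p₁, p₂, hb, hc, hd, he, hf⟩
    refine ⟨p₁, p₂, q₀, q₁, q₂, by rw [mul_comm, hb], by rw [mul_comm, hc], ?_, ?_, ?_⟩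
    all_goals field_simp at hd he hf
    · linear_combination hd
    · linear_combination he
    · linear_combination hf

theorem exists_ternary_mul_ternary_iff (h2 : (2 : k) ≠ 0) (hr : r ≠ 0) (hs : s ≠ 0)
    (ht : t ≠ 0) :
    (∃ p q : Fin 3 → k, (p 0 * q 0 = 0 ∧ p 1 * q 1 = b ∧ p 2 * q 2 = c) ∧
      p 0 * q 1 + r * p 1 * q 0 = 2 * d ∧ p 0 * q 2 + s * p 2 * q 0 = 2 * e ∧
      p 1 * q 2 + t * p 2 * q 1 = 2 * f) ↔
      IsSquare (f ^ 2 - t * b * c) ∧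
        (t * c * d ^ 2 - 2 * d * e * f + b * e ^ 2) *
          (s * r⁻¹ * c * d ^ 2 - 2 * d * e * f + r * t * s⁻¹ * b * e ^ 2) = 0 := by
  rw [mul_eq_zero, and_or_left, ← exists_ternary_mul_binary_iff h2 ht,
    ← exists_binary_mul_ternary_iff h2 hr hs ht]
  constructor
  · rintro ⟨p, q, ⟨h0, hb, hc⟩, hd, he, hf⟩
    rcases mul_eq_zero.mp h0 with hp | hq
    · exact .inr ⟨p 1, p 2, q 0, q 1, q 2, hb, hc, by simpa [hp] using hd,
        by simpa [hp] using he, hf⟩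
    · exact .inl ⟨p 0, p 1, p 2, q 1, q 2, hb, hc, by simpa [hq] using hd,
        by simpa [hq] using he, hf⟩
  · rintro (⟨p₀, p₁, p₂, q₁, q₂, hb, hc, hd, he, hf⟩ | ⟨p₁, p₂, q₀, q₁, q₂, hb, hc, hd, he, hf⟩)
    · exact ⟨![p₀, p₁, p₂], ![0, q₁, q₂], by simp [*]⟩
    · exact ⟨![0, p₁, p₂], ![q₀, q₁, q₂], by simp [*]⟩

end Coefficients

end SkewRel

theorem stmt12_general (k : Type*) [Field k] (h2 : (2 : k) ≠ 0)
    (μ : Fin 3 → Fin 3 → k) (hμdiag : ∀ i, μ i i = 1)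
    (hμ : ∀ i j, μ i j * μ j i = 1)
    (a b c d e f : k)
    (ha : a = 0) :
    (∃ L1 ∈ (Submodule.span k ({z k μ 0, z k μ 1, z k μ 2} : Set (RingQuot (SkewRel k μ)))),
      ∃ L2 ∈ (Submodule.span k ({z k μ 0, z k μ 1, z k μ 2} : Set (RingQuot (SkewRel k μ)))),
        (a • (z k μ 0 * z k μ 0) + b • (z k μ 1 * z k μ 1) + c • (z k μ 2 * z k μ 2) +
      (2 * d) • (z k μ 0 * z k μ 1) + (2 * e) • (z k μ 0 * z k μ 2) +
      (2 * f) • (z k μ 1 * z k μ 2)) = L1 * L2) ↔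
      IsSquare (f ^ 2 - μ 1 2 * b * c) ∧
        (μ 1 2 * c * d ^ 2 - 2 * d * e * f + b * e ^ 2) *
          (μ 0 2 * μ 1 0 * c * d ^ 2 - 2 * d * e * f + μ 0 1 * μ 1 2 * μ 2 0 * b * e ^ 2) = 0 := by
  have hμ0 (i j : Fin 3) : μ i j ≠ 0 := left_ne_zero_of_mul_eq_one (hμ i j)
  have h10 : μ 1 0 = (μ 0 1)⁻¹ := eq_inv_of_mul_eq_one_right (hμ 0 1)
  have h20 : μ 2 0 = (μ 0 2)⁻¹ := eq_inv_of_mul_eq_one_right (hμ 0 2)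
  rw [← SkewRel.quadraticForm_upperTriangular, SkewRel.quadraticForm_eq_mul_iff h2 hμdiag hμ,
    h10, h20, ← SkewRel.exists_ternary_mul_ternary_iff h2 (hμ0 0 1) (hμ0 0 2) (hμ0 1 2)]
  refine exists₂_congr fun p q => ?_
  simp [Fin.forall_fin_succ, ha, eq_comm, mul_assoc, and_assoc]

theorem stmt12 (k : Type*) [Field k] [IsAlgClosed k] (h2 : (2 : k) ≠ 0)
    (μ : Fin 3 → Fin 3 → k) (hμdiag : ∀ i, μ i i = 1)
    (hμ : ∀ i j, μ i j * μ j i = 1)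
    (a b c d e f : k)
    (ha : a = 0) :
    (∃ L1 ∈ (Submodule.span k ({z k μ 0, z k μ 1, z k μ 2} : Set (RingQuot (SkewRel k μ)))),
      ∃ L2 ∈ (Submodule.span k ({z k μ 0, z k μ 1, z k μ 2} : Set (RingQuot (SkewRel k μ)))),
        (a • (z k μ 0 * z k μ 0) + b • (z k μ 1 * z k μ 1) + c • (z k μ 2 * z k μ 2) +
      (2 * d) • (z k μ 0 * z k μ 1) + (2 * e) • (z k μ 0 * z k μ 2) +
      (2 * f) • (z k μ 1 * z k μ 2)) = L1 * L2) ↔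
      ((μ 1 2 * c * d ^ 2 - 2 * d * e * f + b * e ^ 2) * (μ 0 2 * μ 1 0 * c * d ^ 2 - 2 * d * e * f + μ 0 1 * μ 1 2 * μ 2 0 * b * e ^ 2)) = 0 := by
  rw [stmt12_general k h2 μ hμdiag hμ a b c d e f ha]
  exact and_iff_right (IsAlgClosed.exists_eq_mul_self _)
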